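/- Let ε > 0, L > 0, T > 0, p ≥ 2, and let v : [0, T] × ℝ → ℝ be smooth, L-periodic in x, and satisfy ∂ₜv = −∂ₓ( f_ε(v) ∂ₓ³ v ) on [0, T] × ℝ. Then for every t ∈ [0, T], (∫₀^L (∂ₓ v(t,x))² dx)^{p/2} + 2 ∫₀^t (∫₀^L (∂ₓ v(s,x))² dx)^{(p−2)/2} ∫₀^L f_ε(v(s,x)) (∂ₓ³ v(s,x))² dx ds ≤ (∫₀^L (∂ₓ v(0,x))² dx)^{p/2}. -/

import Mathlib

/-! Integrating by parts twice over a period, a solution of `∂ₜv = −∂ₓ(m(v) ∂ₓ³v)` satisfies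
`d/dt ∫ (∂ₓv)² = 2 ∫ ∂ₓv ∂ₓ∂ₜv = −2 ∫ m(v) (∂ₓ³v)²`. The chain rule for `y ↦ y ^ (p / 2)` turns
this into an identity with the constant `p` in front of the time integral, and `2 ≤ p` together
with `0 ≤ m` gives the estimate. -/

open Function Set MeasureTheory

section PartialDerivatives

variable {𝕜 E : Type*} [RCLike 𝕜] [NormedAddCommGroup E] [NormedSpace 𝕜 E] {w : 𝕜 → 𝕜 → E}

theorem hasDerivAt_uncurry_left {t x : 𝕜} (hw : DifferentiableAt 𝕜 (uncurry w) (t, x)) :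
    HasDerivAt (fun τ => w τ x) (fderiv 𝕜 (uncurry w) (t, x) (1, 0)) t :=
  hw.hasFDerivAt.comp_hasDerivAt (f := fun τ => (τ, x)) t
    ((hasDerivAt_id t).prodMk (hasDerivAt_const t x))

theorem hasDerivAt_uncurry_right {t x : 𝕜} (hw : DifferentiableAt 𝕜 (uncurry w) (t, x)) :
    HasDerivAt (w t) (fderiv 𝕜 (uncurry w) (t, x) (0, 1)) x :=
  hw.hasFDerivAt.comp_hasDerivAt x ((hasDerivAt_const x t).prodMk (hasDerivAt_id x))

theorem uncurry_deriv_left_eq_fderiv (hw : Differentiable 𝕜 (uncurry w)) :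
    uncurry (fun t x => deriv (fun τ => w τ x) t) = fun q => fderiv 𝕜 (uncurry w) q (1, 0) :=
  funext fun q => (hasDerivAt_uncurry_left (hw q)).deriv

theorem uncurry_deriv_right_eq_fderiv (hw : Differentiable 𝕜 (uncurry w)) :
    uncurry (fun t => deriv (w t)) = fun q => fderiv 𝕜 (uncurry w) q (0, 1) :=
  funext fun q => (hasDerivAt_uncurry_right (hw q)).deriv

variable {n : WithTop ℕ∞}

theorem contDiff_uncurry_deriv_left (hw : ContDiff 𝕜 (n + 1) (uncurry w)) :
    ContDiff 𝕜 n (uncurry fun t x => deriv (fun τ => w τ x) t) := by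
  rw [uncurry_deriv_left_eq_fderiv (hw.differentiable (by simp))]
  exact (hw.fderiv_right le_rfl).clm_apply contDiff_const

theorem contDiff_uncurry_deriv_right (hw : ContDiff 𝕜 (n + 1) (uncurry w)) :
    ContDiff 𝕜 n (uncurry fun t => deriv (w t)) := by
  rw [uncurry_deriv_right_eq_fderiv (hw.differentiable (by simp))]
  exact (hw.fderiv_right le_rfl).clm_apply contDiff_const

theorem contDiff_uncurry_iterate_deriv_right (k : ℕ) (hw : ContDiff 𝕜 (n + k) (uncurry w)) :
    ContDiff 𝕜 n (uncurry fun t => deriv^[k] (w t)) := by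
  induction k generalizing w with
  | zero => simpa using hw
  | succ k ih => exact ih (contDiff_uncurry_deriv_right (by simpa [add_assoc] using hw))

theorem contDiff_of_uncurry (hw : ContDiff 𝕜 n (uncurry w)) (t : 𝕜) : ContDiff 𝕜 n (w t) :=
  hw.comp (contDiff_prodMk_right t)

theorem deriv_deriv_comm_of_contDiff (hw : ContDiff 𝕜 2 (uncurry w)) (t x : 𝕜) :
    deriv (fun τ => deriv (w τ) x) t = deriv (fun y => deriv (fun τ => w τ y) t) x := by
  have hdiff : Differentiable 𝕜 (uncurry w) := hw.differentiable (by simp)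
  have hdiff' : Differentiable 𝕜 (fderiv 𝕜 (uncurry w)) :=
    (hw.fderiv_right (m := 1) (by norm_num)).differentiable (by simp)
  have fderiv_apply (e q : 𝕜 × 𝕜) : HasFDerivAt (fun q => fderiv 𝕜 (uncurry w) q e)
      ((fderiv 𝕜 (fderiv 𝕜 (uncurry w)) q).flip e) q := by
    simpa using (hdiff' q).hasFDerivAt.clm_apply (hasFDerivAt_const e q)
  have hsymm : IsSymmSndFDerivAt 𝕜 (uncurry w) (t, x) :=
    hw.contDiffAt.isSymmSndFDerivAt (by simp)
  calc deriv (fun τ => deriv (w τ) x) t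
      = fderiv 𝕜 (uncurry fun t => deriv (w t)) (t, x) (1, 0) :=
        (hasDerivAt_uncurry_left (w := fun t => deriv (w t))
          ((contDiff_uncurry_deriv_right (n := 1) hw).differentiable (by simp) (t, x))).deriv
    _ = fderiv 𝕜 (fderiv 𝕜 (uncurry w)) (t, x) (1, 0) (0, 1) := by
        rw [uncurry_deriv_right_eq_fderiv hdiff, (fderiv_apply _ _).fderiv,
          ContinuousLinearMap.flip_apply]
    _ = fderiv 𝕜 (fderiv 𝕜 (uncurry w)) (t, x) (0, 1) (1, 0) := hsymm _ _
    _ = fderiv 𝕜 (uncurry fun t x => deriv (fun τ => w τ x) t) (t, x) (0, 1) := by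
        rw [uncurry_deriv_left_eq_fderiv hdiff, (fderiv_apply _ _).fderiv,
          ContinuousLinearMap.flip_apply]
    _ = deriv (fun y => deriv (fun τ => w τ y) t) x :=
        (hasDerivAt_uncurry_right (w := fun t x => deriv (fun τ => w τ x) t)
          ((contDiff_uncurry_deriv_left (n := 1) hw).differentiable (by simp) (t, x))).deriv.symm

end PartialDerivatives

section IntervalIntegrals

theorem hasDerivAt_intervalIntegral_of_continuous {𝕜 E : Type*} [RCLike 𝕜] [NormedAddCommGroup E]
    [NormedSpace ℝ E] [NormedSpace 𝕜 E] {μ : Measure ℝ} [IsLocallyFiniteMeasure μ]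
    {F F' : 𝕜 → ℝ → E} (hF : ∀ t, Continuous (F t)) (hF' : Continuous (uncurry F'))
    (hderiv : ∀ t x, HasDerivAt (fun τ => F τ x) (F' t x) t) (a b : ℝ) (t : 𝕜) :
    HasDerivAt (fun τ => ∫ x in a..b, F τ x ∂μ) (∫ x in a..b, F' t x ∂μ) t := by
  obtain ⟨C, hC⟩ := ((isCompact_closedBall t 1).prod
    (isCompact_uIcc (a := a) (b := b))).exists_bound_of_continuousOn hF'.continuousOn
  refine (intervalIntegral.hasDerivAt_integral_of_dominated_loc_of_deriv_le
    (bound := fun _ => C) (Metric.closedBall_mem_nhds t one_pos)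
    (.of_forall fun τ => (hF τ).aestronglyMeasurable) ((hF t).intervalIntegrable a b)
    (hF'.uncurry_left t).aestronglyMeasurable
    (.of_forall fun x hx τ hτ => hC (τ, x) ⟨hτ, uIoc_subset_uIcc hx⟩)
    intervalIntegrable_const (.of_forall fun x _ τ _ => hderiv τ x)).2

theorem integral_rpow_sub_one_mul_deriv {f f' : ℝ → ℝ} {a b q : ℝ} (hq : 1 ≤ q)
    (hf : ∀ x ∈ uIcc a b, HasDerivAt f (f' x) x) (hf' : ContinuousOn f' (uIcc a b)) :
    ∫ x in a..b, f x ^ (q - 1) * f' x = (f b ^ q - f a ^ q) / q := by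
  have hcont : Continuous fun y : ℝ => y ^ (q - 1) :=
    Real.continuous_rpow_const (sub_nonneg.2 hq)
  calc ∫ x in a..b, f x ^ (q - 1) * f' x
      = ∫ y in f a..f b, y ^ (q - 1) := intervalIntegral.integral_comp_mul_deriv hf hf' hcont
    _ = (f b ^ q - f a ^ q) / q := by
        rw [integral_rpow (.inl (by linarith)), sub_add_cancel]

end IntervalIntegrals

section Periodic

theorem periodic_deriv {𝕜 F : Type*} [NontriviallyNormedField 𝕜] [NormedAddCommGroup F]
    [NormedSpace 𝕜 F] {f : 𝕜 → F} {c : 𝕜} (hf : Periodic f c) : Periodic (deriv f) c := fun x => by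
  rw [← deriv_comp_add_const, hf.funext]

theorem periodic_iterate_deriv {𝕜 F : Type*} [NontriviallyNormedField 𝕜] [NormedAddCommGroup F]
    [NormedSpace 𝕜 F] {f : 𝕜 → F} {c : 𝕜} (hf : Periodic f c) (k : ℕ) :
    Periodic (deriv^[k] f) c := by
  induction k generalizing f with
  | zero => exact hf
  | succ _ ih => exact ih (periodic_deriv hf)

variable {A : Type*} [NormedRing A] [NormedAlgebra ℝ A] [CompleteSpace A] {f g : ℝ → A} {c : ℝ}

theorem integral_mul_deriv_eq_neg_of_periodic (hf : ContDiff ℝ 1 f) (hg : ContDiff ℝ 1 g)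
    (hfc : Periodic f c) (hgc : Periodic g c) (a : ℝ) :
    ∫ x in a..a + c, f x * deriv g x = -∫ x in a..a + c, deriv f x * g x := by
  rw [intervalIntegral.integral_mul_deriv_eq_deriv_mul
    (fun x _ => (hf.differentiable one_ne_zero x).hasDerivAt)
    (fun x _ => (hg.differentiable one_ne_zero x).hasDerivAt)
    (hf.continuous_deriv_one.intervalIntegrable _ _)
    (hg.continuous_deriv_one.intervalIntegrable _ _), hfc a, hgc a, sub_self, zero_sub]

theorem integral_mul_deriv_deriv_of_periodic (hf : ContDiff ℝ 2 f) (hg : ContDiff ℝ 2 g)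
    (hfc : Periodic f c) (hgc : Periodic g c) (a : ℝ) :
    ∫ x in a..a + c, f x * deriv (deriv g) x = ∫ x in a..a + c, deriv (deriv f) x * g x := by
  have hf' : ContDiff ℝ 1 (deriv f) := hf.deriv'
  have hg' : ContDiff ℝ 1 (deriv g) := hg.deriv'
  rw [integral_mul_deriv_eq_neg_of_periodic (hf.of_le one_le_two) hg' hfc (periodic_deriv hgc),
    integral_mul_deriv_eq_neg_of_periodic hf' (hg.of_le one_le_two) (periodic_deriv hfc) hgc,
    neg_neg]

end Periodic

section ThinFilm

/-- The squared `L²` norm of `∂ₓu` over the period cell `[0, L]`, i.e. the surface energy of a film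
of height `u`, without the customary factor `1 / 2`. -/
noncomputable def dirichletEnergy (L : ℝ) (u : ℝ → ℝ) : ℝ :=
  ∫ x in (0 : ℝ)..L, deriv u x ^ 2

/-- The flux `m(u) ∂ₓ³u` driven by surface tension in a film of height `u`, for the mobility
function `m`. -/
noncomputable def thinFilmFlux (m u : ℝ → ℝ) (x : ℝ) : ℝ :=
  m (u x) * deriv^[3] u x

/-- The rate `∫ m(u) (∂ₓ³u)²` over the period cell `[0, L]` at which the flow with mobility `m`
dissipates half of the `dirichletEnergy`. -/
noncomputable def thinFilmDissipation (m : ℝ → ℝ) (L : ℝ) (u : ℝ → ℝ) : ℝ :=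
  ∫ x in (0 : ℝ)..L, m (u x) * deriv^[3] u x ^ 2

/-- The thin-film equation `∂ₜv = −∂ₓ(m(v) ∂ₓ³v)` with mobility `m`, at all points of the time
slice `t`; the first argument of `v` is time, the second one space. -/
def SolvesThinFilmAt (m : ℝ → ℝ) (v : ℝ → ℝ → ℝ) (t : ℝ) : Prop :=
  ∀ x, deriv (fun τ => v τ x) t = -deriv (thinFilmFlux m (v t)) x

variable {m : ℝ → ℝ} {L : ℝ} {v : ℝ → ℝ → ℝ}

theorem dirichletEnergy_nonneg (hL : 0 ≤ L) (u : ℝ → ℝ) : 0 ≤ dirichletEnergy L u :=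
  intervalIntegral.integral_nonneg hL fun _ _ => sq_nonneg _

theorem thinFilmDissipation_nonneg (hm : ∀ y, 0 ≤ m y) (hL : 0 ≤ L) (u : ℝ → ℝ) :
    0 ≤ thinFilmDissipation m L u :=
  intervalIntegral.integral_nonneg hL fun _ _ => mul_nonneg (hm _) (sq_nonneg _)

theorem periodic_thinFilmFlux {u : ℝ → ℝ} (hu : Periodic u L) : Periodic (thinFilmFlux m u) L :=
  (hu.comp m).mul (periodic_iterate_deriv hu 3)

theorem continuous_thinFilmDissipation (hm : Continuous m) (hv : ContDiff ℝ 3 (uncurry v)) :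
    Continuous fun t => thinFilmDissipation m L (v t) := by
  have hv₃ : Continuous (uncurry fun t => deriv^[3] (v t)) :=
    (contDiff_uncurry_iterate_deriv_right (n := 0) 3 (by simpa using hv)).continuous
  exact intervalIntegral.continuous_parametric_intervalIntegral_of_continuous'
    ((hm.comp hv.continuous).mul (hv₃.pow 2)) 0 L

theorem hasDerivAt_dirichletEnergy (hv : ContDiff ℝ 2 (uncurry v)) (t : ℝ) :
    HasDerivAt (fun τ => dirichletEnergy L (v τ))
      (2 * ∫ x in (0 : ℝ)..L, deriv (v t) x * deriv (fun y => deriv (fun τ => v τ y) t) x) t := by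
  have hvx : ContDiff ℝ 1 (uncurry fun t => deriv (v t)) := contDiff_uncurry_deriv_right hv
  have hvtx : Continuous (uncurry fun t x => deriv (fun y => deriv (fun τ => v τ y) t) x) :=
    (contDiff_uncurry_deriv_right (n := 0) (contDiff_uncurry_deriv_left (n := 1) hv)).continuous
  have hcont : Continuous (uncurry fun t x =>
      2 * (deriv (v t) x * deriv (fun y => deriv (fun τ => v τ y) t) x)) :=
    continuous_const.mul (hvx.continuous.mul hvtx)
  have hasDerivAt_sq (t x : ℝ) : HasDerivAt (fun τ => deriv (v τ) x ^ 2)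
      (2 * (deriv (v t) x * deriv (fun y => deriv (fun τ => v τ y) t) x)) t := by
    rw [← deriv_deriv_comm_of_contDiff hv]
    have hdiff : DifferentiableAt ℝ (fun τ => deriv (v τ) x) t :=
      (hasDerivAt_uncurry_left (hvx.differentiable one_ne_zero (t, x))).differentiableAt
    simpa [mul_assoc] using hdiff.hasDerivAt.fun_pow 2
  rw [← intervalIntegral.integral_const_mul]
  exact hasDerivAt_intervalIntegral_of_continuous
    (fun t => (contDiff_of_uncurry hvx t).continuous.pow 2)
    hcont hasDerivAt_sq 0 L t

-- By the equation, the flux gains a derivative: its own derivative `−∂ₜv` is again `C¹`.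
theorem contDiff_thinFilmFlux (hm : Differentiable ℝ m) (hv : ContDiff ℝ 4 (uncurry v)) {t : ℝ}
    (heq : SolvesThinFilmAt m v t) : ContDiff ℝ 2 (thinFilmFlux m (v t)) := by
  have hvt : ContDiff ℝ 4 (v t) := contDiff_of_uncurry hv t
  have hflux : Differentiable ℝ (thinFilmFlux m (v t)) :=
    (hm.comp (hvt.differentiable (by simp))).mul
      ((ContDiff.iterate_deriv' 1 3 hvt).differentiable (by simp))
  have hderiv : deriv (thinFilmFlux m (v t)) = fun x => -deriv (fun τ => v τ x) t :=
    funext fun x => by rw [heq x, neg_neg]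
  refine contDiff_succ_iff_deriv (n := 1).2 ⟨hflux, by simp, ?_⟩
  rw [hderiv]
  exact (contDiff_of_uncurry (contDiff_uncurry_deriv_left (n := 1)
    (hv.of_le (by norm_num))) t).neg

theorem hasDerivAt_dirichletEnergy_of_solvesThinFilmAt (hm : Differentiable ℝ m)
    (hv : ContDiff ℝ 4 (uncurry v)) {t : ℝ} (hper : Periodic (v t) L)
    (heq : SolvesThinFilmAt m v t) :
    HasDerivAt (fun τ => dirichletEnergy L (v τ)) (-2 * thinFilmDissipation m L (v t)) t := by
  have hvx : ContDiff ℝ 2 (deriv (v t)) :=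
    ((contDiff_of_uncurry hv t).of_le (by norm_num : (3 : WithTop ℕ∞) ≤ 4)).deriv'
  have green : ∫ x in (0 : ℝ)..L, deriv (v t) x * deriv (deriv (thinFilmFlux m (v t))) x =
      ∫ x in (0 : ℝ)..L, deriv^[3] (v t) x * thinFilmFlux m (v t) x := by
    simpa only [zero_add, iterate_succ_apply, iterate_zero_apply] using
      integral_mul_deriv_deriv_of_periodic hvx
        (contDiff_thinFilmFlux hm hv heq) (periodic_deriv hper) (periodic_thinFilmFlux hper) 0
  have dissipation_eq : ∫ x in (0 : ℝ)..L, deriv^[3] (v t) x * thinFilmFlux m (v t) x =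
      thinFilmDissipation m L (v t) :=
    intervalIntegral.integral_congr fun x _ => by simp only [thinFilmFlux]; ring
  convert hasDerivAt_dirichletEnergy (L := L) (hv.of_le (by norm_num)) t using 1
  simp only [funext heq, deriv.fun_neg, mul_neg, intervalIntegral.integral_neg, green,
    dissipation_eq, neg_mul]

theorem dirichletEnergy_rpow_add_integral (hm : Differentiable ℝ m)
    (hv : ContDiff ℝ 4 (uncurry v)) {a b p : ℝ} (hp : 2 ≤ p)
    (hper : ∀ t ∈ uIcc a b, Periodic (v t) L) (heq : ∀ t ∈ uIcc a b, SolvesThinFilmAt m v t) :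
    dirichletEnergy L (v b) ^ (p / 2) + p * ∫ s in a..b,
        dirichletEnergy L (v s) ^ ((p - 2) / 2) * thinFilmDissipation m L (v s) =
      dirichletEnergy L (v a) ^ (p / 2) := by
  have hD : Continuous fun t => thinFilmDissipation m L (v t) :=
    continuous_thinFilmDissipation hm.continuous (hv.of_le (by norm_num))
  have chain : -2 * ∫ s in a..b,
        dirichletEnergy L (v s) ^ ((p - 2) / 2) * thinFilmDissipation m L (v s) =
      (dirichletEnergy L (v b) ^ (p / 2) - dirichletEnergy L (v a) ^ (p / 2)) / (p / 2) := by
    rw [← integral_rpow_sub_one_mul_deriv (by linarith)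
        (fun t ht => hasDerivAt_dirichletEnergy_of_solvesThinFilmAt hm hv (hper t ht) (heq t ht))
        (continuous_const.mul hD).continuousOn,
      ← intervalIntegral.integral_const_mul]
    simp only [show p / 2 - 1 = (p - 2) / 2 by ring, mul_left_comm]
  rw [eq_div_iff (by linarith : 0 < p / 2).ne'] at chain
  linarith

theorem stmt_13_general (hm : Differentiable ℝ m) (hm₀ : ∀ y, 0 ≤ m y) (hL : 0 ≤ L) {T p : ℝ}
    (hp : 2 ≤ p) (hv : ContDiff ℝ 4 (uncurry v)) (hper : ∀ t ∈ Icc 0 T, Periodic (v t) L)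
    (heq : ∀ t ∈ Icc 0 T, SolvesThinFilmAt m v t) {t : ℝ} (ht : t ∈ Icc 0 T) :
    dirichletEnergy L (v t) ^ (p / 2) + 2 * ∫ s in (0 : ℝ)..t,
        dirichletEnergy L (v s) ^ ((p - 2) / 2) * thinFilmDissipation m L (v s) ≤
      dirichletEnergy L (v 0) ^ (p / 2) := by
  have hsub : uIcc 0 t ⊆ Icc 0 T := uIcc_of_le ht.1 ▸ Icc_subset_Icc_right ht.2
  have hint : 0 ≤ ∫ s in (0 : ℝ)..t,
      dirichletEnergy L (v s) ^ ((p - 2) / 2) * thinFilmDissipation m L (v s) :=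
    intervalIntegral.integral_nonneg ht.1 fun s _ =>
      mul_nonneg (Real.rpow_nonneg (dirichletEnergy_nonneg hL _) _)
        (thinFilmDissipation_nonneg hm₀ hL _)
  rw [← dirichletEnergy_rpow_add_integral hm hv hp (fun s hs => hper s (hsub hs))
    fun s hs => heq s (hsub hs)]
  gcongr

/-- The mobility `f_ε(s) = s⁴ / (ε + s²)`, which regularizes the quadratic mobility `s²`. -/
noncomputable def regularizedMobility (ε s : ℝ) : ℝ :=
  s ^ 4 / (ε + s ^ 2)

theorem regularizedMobility_nonneg {ε : ℝ} (hε : 0 ≤ ε) (s : ℝ) : 0 ≤ regularizedMobility ε s := by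
  unfold regularizedMobility
  positivity

theorem differentiable_regularizedMobility {ε : ℝ} (hε : 0 < ε) :
    Differentiable ℝ (regularizedMobility ε) := by
  unfold regularizedMobility
  fun_prop (disch := intro s; positivity)

end ThinFilm

/-- Estimate (3.5) of the paper, the `p`-th power energy estimate for the deterministic
dynamics: if `v` is smooth, `L`-periodic in `x`, and solves `∂ₜv = −∂ₓ(f_ε(v) ∂ₓ³v)`
on `[0,T] × ℝ`, then for `p ≥ 2` and every `t ∈ [0,T]`,
`(∫₀ᴸ (∂ₓv(t))²)^{p/2} + 2∫₀ᵗ (∫₀ᴸ (∂ₓv(s))²)^{(p−2)/2} ∫₀ᴸ f_ε(v)(∂ₓ³v)² ds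
  ≤ (∫₀ᴸ (∂ₓv(0))²)^{p/2}`. -/
theorem stmt_13 (ε L T p : ℝ) (hε : 0 < ε) (hL : 0 < L) (hT : 0 < T) (hp : 2 ≤ p)
    (v : ℝ → ℝ → ℝ) (hv : ContDiff ℝ (⊤ : ℕ∞) (Function.uncurry v))
    (hper : ∀ t, Function.Periodic (v t) L)
    (heq : ∀ t ∈ Set.Icc (0 : ℝ) T, ∀ x : ℝ,
      deriv (fun τ => v τ x) t =
        -deriv (fun y => (v t y ^ 4 / (ε + v t y ^ 2)) * deriv^[3] (v t) y) x) :
    ∀ t ∈ Set.Icc (0 : ℝ) T,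
      (∫ x in (0:ℝ)..L, (deriv (v t) x) ^ 2) ^ (p / 2) +
        2 * ∫ s in (0:ℝ)..t,
          (∫ x in (0:ℝ)..L, (deriv (v s) x) ^ 2) ^ ((p - 2) / 2) *
            ∫ x in (0:ℝ)..L,
              (v s x ^ 4 / (ε + v s x ^ 2)) * (deriv^[3] (v s) x) ^ 2 ≤
      (∫ x in (0:ℝ)..L, (deriv (v 0) x) ^ 2) ^ (p / 2) :=
  fun _ ht => stmt_13_general (differentiable_regularizedMobility hε)
    (regularizedMobility_nonneg hε.le) hL.le hp (mod_cast contDiff_infty.1 hv 4)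
    (fun s _ => hper s) heq ht
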